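/- Let f be an ergodic invertible measure-preserving transformation of a standard Borel probability space (X,μ) and let (f,A) be an essentially unbounded cocycle with values in SL±(2,ℝ). Then there exist measurable maps E₁, E₂ : X → ℙ(ℝ²) such that every (f,A)-invariant probability measure μ̂ on X × ℙ(ℝ²) (projecting to μ and invariant under F(x,E) = (f(x), A(x)E)) has the form dμ̂ = (λ δ_{E₁(x)} + (1−λ) δ_{E₂(x)}) dμ(x) for some 0 ≤ λ ≤ 1; equivalently μ̂ = λ·(push-forward of μ under x ↦ (x,E₁(x))) + (1−λ)·(push-forward of μ under x ↦ (x,E₂(x))). -/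

import Mathlib

open MeasureTheory Filter
open scoped ENNReal

/-- Matrices are measurable as functions of their entries. -/
instance matrixMeasurableSpace {m n α : Type*} [MeasurableSpace α] :
    MeasurableSpace (Matrix m n α) :=
  show MeasurableSpace (m → n → α) from inferInstance

/-- The shift map on two-sided sequences. -/
def shift {Y : Type*} (ω : ℤ → Y) : ℤ → Y := fun n => ω (n + 1)

/-- The skew-shift `f̄(ω,x) = (θω, f_{ω₀}(x))` of a random transformation. -/
def fbar {Y X : Type*} (f : Y → X → X) : (ℤ → Y) × X → (ℤ → Y) × X :=
  fun q => (shift q.1, f (q.1 0) q.2)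

/-- The locally constant map `Ā(ω,x) = A_{ω₀}(x)` defining a random cocycle. -/
def Abar {Y X G : Type*} (A : Y → X → G) : (ℤ → Y) × X → G := fun q => A (q.1 0) q.2

/-- Iterates of a cocycle: `cocycleIter T A n z = A(T^{n-1} z) ⋯ A(T z) A(z)`. -/
def cocycleIter {Z G : Type*} [Monoid G] (T : Z → Z) (A : Z → G) : ℕ → Z → G
  | 0, _ => 1
  | n + 1, z => cocycleIter T A n (T z) * A z

/-- Lower asymptotic density of a set of natural numbers. -/
noncomputable def lowerDensity (D : Set ℕ) : ℝ :=
  Filter.liminf (fun n : ℕ => ((D ∩ Set.Iic n).ncard : ℝ) / n) Filter.atTop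

/-- A sequence of reals converges essentially to infinity: for every `K > 0` the set
of times at which the sequence is `≤ K` has lower asymptotic density zero. -/
def ConvergesEssentiallyToInfinity (u : ℕ → ℝ) : Prop :=
  ∀ K > (0 : ℝ), lowerDensity {n | u n ≤ K} = 0

/-- The operator norm of a real `d × d` matrix acting on Euclidean space. -/
noncomputable def opNorm {d : ℕ} (M : Matrix (Fin d) (Fin d) ℝ) : ℝ :=
  ‖LinearMap.toContinuousLinearMap (Matrix.toEuclideanLin M)‖

/-- The projective space of `ℝ^d`. -/
abbrev Proj (d : ℕ) := Projectivization ℝ (Fin d → ℝ)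

noncomputable instance (d : ℕ) : MeasurableSpace (Proj d) :=
  show MeasurableSpace (Quotient _) from inferInstance

lemma glInjective {d : ℕ} (A : GL (Fin d) ℝ) :
    Function.Injective (Matrix.toLin' (A : Matrix (Fin d) (Fin d) ℝ)) := by
  have h : Function.LeftInverse
      (Matrix.toLin' (((A⁻¹ : GL (Fin d) ℝ)) : Matrix (Fin d) (Fin d) ℝ))
      (Matrix.toLin' ((A : Matrix (Fin d) (Fin d) ℝ))) := by
    intro v
    rw [← Matrix.toLin'_mul_apply]
    have h1 : ((A⁻¹ : GL (Fin d) ℝ) : Matrix (Fin d) (Fin d) ℝ) *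
        (A : Matrix (Fin d) (Fin d) ℝ) = 1 := by
      exact_mod_cast A.inv_mul
    rw [h1]
    simp
  exact h.injective

/-- The projective action of an invertible matrix on `ℙ(ℝ^d)`. -/
noncomputable def projAction {d : ℕ} (A : GL (Fin d) ℝ) : Proj d → Proj d :=
  Projectivization.map (Matrix.toLin' (A : Matrix (Fin d) (Fin d) ℝ)) (glInjective A)

section Maximal

variable {Z : Type*}

/-- The running maximum `max (0, S₁ g, …, S_N g)` of the Birkhoff sums of `g`. -/
def birkhoffMax (T : Z → Z) (g : Z → ℝ) : ℕ → Z → ℝ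
  | 0, _ => 0
  | n + 1, z => max 0 (g z + birkhoffMax T g n (T z))

lemma birkhoffMax_nonneg (T : Z → Z) (g : Z → ℝ) (n : ℕ) (z : Z) : 0 ≤ birkhoffMax T g n z := by
  cases n with
  | zero => exact le_rfl
  | succ n => exact le_max_left _ _

lemma birkhoffMax_le_succ (T : Z → Z) (g : Z → ℝ) (n : ℕ) (z : Z) :
    birkhoffMax T g n z ≤ birkhoffMax T g (n + 1) z := by
  induction n generalizing z with
  | zero => exact birkhoffMax_nonneg T g 1 z
  | succ n ih => exact max_le_max le_rfl (by linarith [ih (T z)])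

lemma birkhoffSum_le_birkhoffMax (T : Z → Z) (g : Z → ℝ) (n : ℕ) (z : Z) :
    birkhoffSum T g n z ≤ birkhoffMax T g n z := by
  induction n generalizing z with
  | zero => simp [birkhoffMax]
  | succ n ih =>
    rw [birkhoffSum_succ']
    exact le_trans (by linarith [ih (T z)]) (le_max_right _ _)

variable [MeasurableSpace Z] {η : Measure Z} {T : Z → Z}

lemma integrable_birkhoffMax (hT : MeasurePreserving T η η) {g : Z → ℝ} (hg : Integrable g η)
    (n : ℕ) : Integrable (birkhoffMax T g n) η := by
  induction n with
  | zero => exact integrable_zero _ _ _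
  | succ n ih => exact (integrable_zero _ _ _).sup (hg.add (hT.integrable_comp_of_integrable ih))

lemma measurable_birkhoffMax (hT : Measurable T) {g : Z → ℝ} (hg : Measurable g)
    (n : ℕ) : Measurable (birkhoffMax T g n) := by
  induction n with
  | zero => exact measurable_const
  | succ n ih => exact measurable_const.max (hg.add (ih.comp hT))

/-- The maximal ergodic theorem, for an observable one of whose Birkhoff sums is positive at
almost every point. -/
lemma integral_nonneg_of_exists_birkhoffSum_pos (hT : MeasurePreserving T η η) {g : Z → ℝ}
    (hgm : Measurable g) (hg : Integrable g η)
    (hpos : ∀ᵐ z ∂η, ∃ n, 0 < birkhoffSum T g n z) : 0 ≤ ∫ z, g z ∂η := by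
  let E : ℕ → Set Z := fun n => {z | 0 < birkhoffMax T g (n + 1) z}
  have hE : ∀ n, MeasurableSet (E n) := fun n =>
    measurableSet_lt measurable_const (measurable_birkhoffMax hT.measurable hgm _)
  have hlim : Tendsto (fun n => ∫ z, (E n).indicator g z ∂η) atTop (nhds (∫ z, g z ∂η)) := by
    refine tendsto_integral_of_dominated_convergence (fun z => ‖g z‖)
      (fun n => (hgm.indicator (hE n)).aestronglyMeasurable) hg.norm
      (fun n => .of_forall fun z => norm_indicator_le_norm_self _ _) ?_
    filter_upwards [hpos] with z hz
    obtain ⟨n, hn⟩ := hz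
    refine tendsto_const_nhds.congr' ?_
    filter_upwards [eventually_ge_atTop n] with m hm
    rw [Set.indicator_of_mem]
    have hmono : Monotone fun k => birkhoffMax T g k z :=
      monotone_nat_of_le_succ fun k => birkhoffMax_le_succ T g k z
    exact lt_of_lt_of_le (lt_of_lt_of_le hn (birkhoffSum_le_birkhoffMax T g n z))
      (hmono (by omega : n ≤ m + 1))
  refine ge_of_tendsto' hlim fun n => ?_
  have hM := integrable_birkhoffMax hT hg (n + 1)
  have hMT : Integrable (fun z => birkhoffMax T g (n + 1) (T z)) η :=
    hT.integrable_comp_of_integrable hM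
  have heq : ∫ z, birkhoffMax T g (n + 1) (T z) ∂η = ∫ z, birkhoffMax T g (n + 1) z ∂η := by
    conv_rhs => rw [← hT.map_eq]
    rw [integral_map hT.aemeasurable
      (measurable_birkhoffMax hT.measurable hgm _).aestronglyMeasurable]
  calc (0 : ℝ) = ∫ z, (birkhoffMax T g (n + 1) z - birkhoffMax T g (n + 1) (T z)) ∂η := by
        rw [integral_sub hM hMT, heq, sub_self]
    _ ≤ ∫ z, (E n).indicator g z ∂η := by
        refine integral_mono (hM.sub hMT) (hg.indicator (hE n)) fun z => ?_
        by_cases hz : z ∈ E n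
        · rw [Set.indicator_of_mem hz]
          have h1 : birkhoffMax T g (n + 1) z = g z + birkhoffMax T g n (T z) := by
            rcases max_choice 0 (g z + birkhoffMax T g n (T z)) with h | h
            · exact absurd (show 0 < max 0 (g z + birkhoffMax T g n (T z)) from hz) (by simp [h])
            · exact h
          have h2 := birkhoffMax_le_succ T g n (T z)
          simp only []
          linarith
        · rw [Set.indicator_of_notMem hz]
          have h1 : birkhoffMax T g (n + 1) z ≤ 0 := not_lt.1 hz
          have h2 := birkhoffMax_nonneg T g (n + 1) (T z)
          simp only []
          linarith

lemma exists_ncard_lt_of_lowerDensity_eq_zero {D : Set ℕ} (hD : lowerDensity D = 0) {ε : ℝ}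
    (hε : 0 < ε) : ∃ n : ℕ, ((D ∩ Set.Iic n).ncard : ℝ) < ε * (n + 1) := by
  have hbdd : ∀ n : ℕ, ((D ∩ Set.Iic n).ncard : ℝ) / n ≤ 2 := by
    intro n
    have h1 : (D ∩ Set.Iic n).ncard ≤ n + 1 := by
      refine (Set.ncard_le_ncard Set.inter_subset_right (Set.finite_Iic n)).trans ?_
      simp [Set.ncard_eq_toFinset_card']
    rcases Nat.eq_zero_or_pos n with rfl | hn
    · simp
    · have hn' : (1 : ℝ) ≤ n := by exact_mod_cast hn
      rw [div_le_iff₀ (by linarith)]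
      have : ((D ∩ Set.Iic n).ncard : ℝ) ≤ n + 1 := by exact_mod_cast h1
      linarith
  have hfr := frequently_lt_of_liminf_lt (f := atTop)
    (u := fun n : ℕ => ((D ∩ Set.Iic n).ncard : ℝ) / n) (b := ε)
    (IsBoundedUnder.isCoboundedUnder_ge (isBoundedUnder_of ⟨2, hbdd⟩))
    (by rw [← lowerDensity, hD]; exact hε)
  obtain ⟨n, hn, hn0⟩ := (hfr.and_eventually (eventually_gt_atTop 0)).exists
  refine ⟨n, ?_⟩
  rw [div_lt_iff₀ (by exact_mod_cast hn0)] at hn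
  nlinarith

/-- A set is null if almost all of its points return to it within a set of times of
lower density zero. -/
lemma measure_eq_zero_of_lowerDensity_returns [IsFiniteMeasure η]
    (hT : MeasurePreserving T η η) {G : Set Z} (hG : MeasurableSet G)
    (h : ∀ᵐ z ∂η, z ∈ G → ∃ D : Set ℕ, lowerDensity D = 0 ∧ ∀ n, T^[n] z ∈ G → n ∈ D) :
    η G = 0 := by
  classical
  have key : ∀ ε : ℝ, 0 < ε → η.real G ≤ ε * η.real Set.univ := by
    intro ε hε
    have hint : Integrable (G.indicator fun _ => (1 : ℝ)) η :=
      (integrable_const 1).indicator hG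
    have hnn := integral_nonneg_of_exists_birkhoffSum_pos hT
      (g := fun z => ε - G.indicator (fun _ => (1 : ℝ)) z)
      (measurable_const.sub (measurable_const.indicator hG)) ((integrable_const ε).sub hint) ?_
    · rw [integral_sub (integrable_const ε) hint, integral_indicator hG] at hnn
      simp only [integral_const, smul_eq_mul, mul_one, measureReal_restrict_apply_univ] at hnn
      linarith
    · filter_upwards [h] with z hz
      by_cases hzG : z ∈ G
      · obtain ⟨D, hD, hret⟩ := hz hzG
        obtain ⟨n, hn⟩ := exists_ncard_lt_of_lowerDensity_eq_zero hD hε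
        refine ⟨n + 1, ?_⟩
        have hsum : ∑ k ∈ Finset.range (n + 1), G.indicator (fun _ => (1 : ℝ)) (T^[k] z)
            ≤ ((D ∩ Set.Iic n).ncard : ℝ) := by
          simp only [Set.indicator_apply]
          rw [← Finset.sum_filter, Finset.sum_const, nsmul_eq_mul, mul_one]
          have hsub : (↑((Finset.range (n + 1)).filter fun k => T^[k] z ∈ G) : Set ℕ) ⊆
              D ∩ Set.Iic n := by
            intro k hk
            rw [Finset.mem_coe, Finset.mem_filter, Finset.mem_range] at hk
            exact ⟨hret k hk.2, Nat.lt_succ_iff.1 hk.1⟩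
          have hcard := Set.ncard_le_ncard hsub ((Set.finite_Iic n).subset Set.inter_subset_right)
          rw [Set.ncard_coe_finset] at hcard
          exact_mod_cast hcard
        simp only [birkhoffSum, Finset.sum_sub_distrib, Finset.sum_const, Finset.card_range,
          nsmul_eq_mul]
        push_cast
        linarith
      · exact ⟨1, by simp [hzG, hε]⟩
  have hle : η.real G ≤ 0 := by
    have hlim : Tendsto (fun ε : ℝ => ε * η.real Set.univ) (nhdsWithin 0 (Set.Ioi 0))
        (nhds (0 * η.real Set.univ)) :=
      (tendsto_id.mul_const _).mono_left nhdsWithin_le_nhds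
    rw [zero_mul] at hlim
    exact ge_of_tendsto hlim (by filter_upwards [self_mem_nhdsWithin] with ε hε using key ε hε)
  exact (measureReal_eq_zero_iff).1 (le_antisymm hle measureReal_nonneg)

end Maximal

section ProjectiveLine

/-- The point of the projective line spanned by a vector, with a junk value at zero. -/
noncomputable def projMk (v : Fin 2 → ℝ) : Proj 2 :=
  open Classical in
  if h : v ≠ 0 then Projectivization.mk ℝ v h else Projectivization.mk ℝ ![0, 1] (by simp)

/-- The representative of a point of the projective line of the form `(1, t)` or `(0, 1)`. -/
noncomputable def projRep : Proj 2 → Fin 2 → ℝ :=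
  Projectivization.lift
    (fun v : {v : Fin 2 → ℝ // v ≠ 0} => if v.1 0 = 0 then ![0, 1] else ![1, v.1 1 / v.1 0])
    (by
      rintro ⟨a, ha⟩ ⟨b, hb⟩ t (rfl : a = t • b)
      have ht : t ≠ 0 := by rintro rfl; simp at ha
      by_cases h : b 0 = 0
      · simp [h]
      · simp [h, ht, mul_div_mul_left])

lemma projMk_of_ne {v : Fin 2 → ℝ} (h : v ≠ 0) : projMk v = Projectivization.mk ℝ v h :=
  dif_pos h

lemma projMk_smul {t : ℝ} (ht : t ≠ 0) (v : Fin 2 → ℝ) : projMk (t • v) = projMk v := by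
  by_cases hv : v = 0
  · simp [hv]
  · rw [projMk_of_ne hv, projMk_of_ne (smul_ne_zero ht hv), Projectivization.mk_eq_mk_iff']
    exact ⟨t, rfl⟩

lemma exists_projRep_projMk {v : Fin 2 → ℝ} (h : v ≠ 0) :
    ∃ t : ℝ, t ≠ 0 ∧ projRep (projMk v) = t • v := by
  have hrep : projRep (projMk v) = if v 0 = 0 then ![0, 1] else ![1, v 1 / v 0] := by
    rw [projMk_of_ne h]; rfl
  rw [hrep]
  by_cases h0 : v 0 = 0
  · have h1 : v 1 ≠ 0 := fun h1 => h (by ext i; fin_cases i <;> simp [h0, h1])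
    refine ⟨(v 1)⁻¹, inv_ne_zero h1, ?_⟩
    ext i; fin_cases i <;> simp [h0, h1]
  · refine ⟨(v 0)⁻¹, inv_ne_zero h0, ?_⟩
    ext i; fin_cases i <;> simp [h0, div_eq_inv_mul]

lemma exists_eq_projMk (p : Proj 2) : ∃ v : Fin 2 → ℝ, v ≠ 0 ∧ p = projMk v :=
  ⟨p.rep, p.rep_nonzero, by rw [projMk_of_ne p.rep_nonzero, p.mk_rep]⟩

lemma projRep_ne_zero (p : Proj 2) : projRep p ≠ 0 := by
  obtain ⟨v, hv, rfl⟩ := exists_eq_projMk p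
  obtain ⟨t, ht, h⟩ := exists_projRep_projMk hv
  rw [h]
  exact smul_ne_zero ht hv

lemma projMk_projRep (p : Proj 2) : projMk (projRep p) = p := by
  obtain ⟨v, hv, rfl⟩ := exists_eq_projMk p
  obtain ⟨t, ht, h⟩ := exists_projRep_projMk hv
  rw [h, projMk_smul ht]

lemma range_projRep : Set.range projRep = {v | v 0 = 1 ∨ v = ![0, 1]} := by
  ext v
  constructor
  · rintro ⟨p, rfl⟩
    induction p using Projectivization.ind with
    | h w hw =>
      change (if w 0 = 0 then ![0, 1] else ![1, w 1 / w 0]) 0 = (1 : ℝ) ∨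
        (if w 0 = 0 then ![0, 1] else ![1, w 1 / w 0]) = ![(0 : ℝ), 1]
      split_ifs <;> simp
  · rintro (h | rfl)
    · have hv : v ≠ 0 := by rintro rfl; simp at h
      refine ⟨Projectivization.mk ℝ v hv, ?_⟩
      change (if v 0 = 0 then ![0, 1] else ![1, v 1 / v 0]) = v
      ext i; fin_cases i <;> simp [h]
    · refine ⟨Projectivization.mk ℝ ![0, 1] (by simp), ?_⟩
      change (if (![0, 1] : Fin 2 → ℝ) 0 = 0 then ![0, 1] else _) = _
      simp

lemma measurable_projectivization_mk :
    Measurable (fun v : {v : Fin 2 → ℝ // v ≠ 0} => (Projectivization.mk ℝ v.1 v.2 : Proj 2)) :=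
  fun _ hs => hs

lemma measurable_projMk : Measurable projMk := by
  classical
  have h := Measurable.dite (s := {v : Fin 2 → ℝ | v ≠ 0}) measurable_projectivization_mk
    (measurable_const (a := (Projectivization.mk ℝ ![0, 1] (by simp) : Proj 2)))
    (measurableSet_singleton (0 : Fin 2 → ℝ)).compl
  have heq : projMk = fun v : Fin 2 → ℝ => if hv : v ∈ {v : Fin 2 → ℝ | v ≠ 0} then
      Projectivization.mk ℝ v hv else Projectivization.mk ℝ ![0, 1] (by simp) := by
    ext1 v
    by_cases hv : v ≠ 0
    · rw [projMk_of_ne hv, dif_pos (show v ∈ {v : Fin 2 → ℝ | v ≠ 0} from hv)]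
    · rw [dif_neg (show v ∉ {v : Fin 2 → ℝ | v ≠ 0} from hv)]
      exact dif_neg hv
  rw [heq]
  exact h

lemma measurable_projRep : Measurable projRep := by
  have h : Measurable (fun v : {v : Fin 2 → ℝ // v ≠ 0} =>
      if v.1 0 = 0 then ![0, 1] else ![1, v.1 1 / v.1 0]) := by
    have h0 : Measurable fun v : {v : Fin 2 → ℝ // v ≠ 0} => v.1 0 :=
      (measurable_pi_apply 0).comp measurable_subtype_coe
    have h1 : Measurable fun v : {v : Fin 2 → ℝ // v ≠ 0} => v.1 1 :=
      (measurable_pi_apply 1).comp measurable_subtype_coe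
    refine Measurable.ite (h0 (measurableSet_singleton 0)) measurable_const ?_
    rw [measurable_pi_iff]
    intro i
    fin_cases i
    · exact measurable_const
    · exact h1.div h0
  exact fun s hs => h hs

lemma measurableEmbedding_projRep : MeasurableEmbedding projRep := by
  refine MeasurableEmbedding.of_measurable_inverse measurable_projRep ?_ measurable_projMk
    projMk_projRep
  rw [range_projRep]
  exact ((measurable_pi_apply 0) (measurableSet_singleton 1)).union (measurableSet_singleton _)

lemma MeasurableEquiv.standardBorelSpace {α β : Type*} [MeasurableSpace α] [MeasurableSpace β]
    [StandardBorelSpace β] (e : α ≃ᵐ β) : StandardBorelSpace α := by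
  obtain ⟨σ, hb, hp⟩ := ‹StandardBorelSpace β›.polish
  refine ⟨σ.induced e, @BorelSpace.mk _ (σ.induced e) _ ?_, e.toEquiv.polishSpace_induced⟩
  have hborel := borel_comap (f := e) (t := σ)
  rw [← hb.measurable_eq, e.measurableEmbedding.comap_eq] at hborel
  exact hborel.symm

instance standardBorelSpace_proj : StandardBorelSpace (Proj 2) :=
  have := measurableEmbedding_projRep.measurableSet_range.standardBorel
  measurableEmbedding_projRep.equivRange.standardBorelSpace

instance nonempty_proj : Nonempty (Proj 2) := ⟨projMk 0⟩

lemma mulVec_ne_zero (B : GL (Fin 2) ℝ) {v : Fin 2 → ℝ} (hv : v ≠ 0) :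
    (B : Matrix (Fin 2) (Fin 2) ℝ).mulVec v ≠ 0 := fun h =>
  hv (glInjective B (by rw [Matrix.toLin'_apply, h, map_zero]))

lemma projAction_projMk (B : GL (Fin 2) ℝ) {v : Fin 2 → ℝ} (hv : v ≠ 0) :
    projAction B (projMk v) = projMk ((B : Matrix (Fin 2) (Fin 2) ℝ).mulVec v) := by
  rw [projMk_of_ne hv, projMk_of_ne (mulVec_ne_zero B hv)]
  rfl

lemma projAction_eq (B : GL (Fin 2) ℝ) (p : Proj 2) :
    projAction B p = projMk ((B : Matrix (Fin 2) (Fin 2) ℝ).mulVec (projRep p)) := by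
  rw [← projAction_projMk B (projRep_ne_zero p), projMk_projRep]

lemma projAction_injective (B : GL (Fin 2) ℝ) : Function.Injective (projAction B) :=
  Projectivization.map_injective _ (glInjective B)

lemma projAction_one (p : Proj 2) : projAction 1 p = p := by
  simp [projAction_eq, projMk_projRep]

lemma projAction_mul (B C : GL (Fin 2) ℝ) (p : Proj 2) :
    projAction (B * C) p = projAction B (projAction C p) := by
  rw [projAction_eq C, projAction_projMk B (mulVec_ne_zero C (projRep_ne_zero p)), projAction_eq,
    Matrix.mulVec_mulVec, Units.val_mul]

lemma measurable_projAction {Y : Type*} [MeasurableSpace Y] {B : Y → GL (Fin 2) ℝ}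
    (hB : Measurable fun y => (B y : Matrix (Fin 2) (Fin 2) ℝ)) {p : Y → Proj 2}
    (hp : Measurable p) : Measurable fun y => projAction (B y) (p y) := by
  simp only [projAction_eq]
  refine measurable_projMk.comp (measurable_pi_iff.2 fun i => ?_)
  simp only [Matrix.mulVec, dotProduct]
  refine Finset.measurable_sum _ fun j _ => ?_
  have h1 : Measurable fun y => (B y : Matrix (Fin 2) (Fin 2) ℝ) i j :=
    (measurable_pi_apply j).comp ((measurable_pi_apply i).comp hB)
  have h2 : Measurable fun y => projRep (p y) j :=
    (measurable_pi_apply j).comp (measurable_projRep.comp hp)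
  exact h1.mul h2

/-- The standard area form on the plane. -/
def wedge (u v : Fin 2 → ℝ) : ℝ := u 0 * v 1 - u 1 * v 0

/-- The square of the Euclidean norm on the plane. -/
def normSqPlane (u : Fin 2 → ℝ) : ℝ := u 0 ^ 2 + u 1 ^ 2

/-- The square of the sine of the angle between two lines is at least `ε`. -/
def Separated (ε : ℝ) (p q : Proj 2) : Prop :=
  ε * (normSqPlane (projRep p) * normSqPlane (projRep q)) ≤ wedge (projRep p) (projRep q) ^ 2

lemma normSqPlane_pos {u : Fin 2 → ℝ} (hu : u ≠ 0) : 0 < normSqPlane u := by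
  have h : u 0 ≠ 0 ∨ u 1 ≠ 0 := by
    by_contra! h
    exact hu (by ext i; fin_cases i <;> simp [h.1, h.2])
  unfold normSqPlane
  rcases h with h | h <;> positivity

lemma wedge_sq_le (u v : Fin 2 → ℝ) : wedge u v ^ 2 ≤ normSqPlane u * normSqPlane v := by
  unfold wedge normSqPlane
  nlinarith [sq_nonneg (u 0 * v 0 + u 1 * v 1)]

lemma separated_projMk {ε : ℝ} {u v : Fin 2 → ℝ} (hu : u ≠ 0) (hv : v ≠ 0) :
    Separated ε (projMk u) (projMk v) ↔
      ε * (normSqPlane u * normSqPlane v) ≤ wedge u v ^ 2 := by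
  obtain ⟨s, hs, hsu⟩ := exists_projRep_projMk hu
  obtain ⟨t, ht, htv⟩ := exists_projRep_projMk hv
  have hst : 0 < s ^ 2 * t ^ 2 := by positivity
  have hl : ε * (normSqPlane (s • u) * normSqPlane (t • v)) =
      s ^ 2 * t ^ 2 * (ε * (normSqPlane u * normSqPlane v)) := by
    simp only [normSqPlane, Pi.smul_apply, smul_eq_mul]
    ring
  have hr : wedge (s • u) (t • v) ^ 2 = s ^ 2 * t ^ 2 * wedge u v ^ 2 := by
    simp only [wedge, Pi.smul_apply, smul_eq_mul]
    ring
  rw [Separated, hsu, htv, hl, hr, mul_le_mul_iff_right₀ hst]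

lemma Separated.mono {ε ε' : ℝ} {p q : Proj 2} (h : Separated ε p q) (hε : ε' ≤ ε) :
    Separated ε' p q := by
  have hu := normSqPlane_pos (projRep_ne_zero p)
  have hv := normSqPlane_pos (projRep_ne_zero q)
  exact (mul_le_mul_of_nonneg_right hε (by positivity)).trans h

lemma exists_separated {p q : Proj 2} (h : p ≠ q) :
    ∃ k : ℕ, Separated (1 / ((k : ℝ) + 1)) p q := by
  have hu := normSqPlane_pos (projRep_ne_zero p)
  have hv := normSqPlane_pos (projRep_ne_zero q)
  have hw : wedge (projRep p) (projRep q) ≠ 0 := by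
    intro hw
    have hp : projRep p ∈ Set.range projRep := ⟨p, rfl⟩
    have hq : projRep q ∈ Set.range projRep := ⟨q, rfl⟩
    rw [range_projRep] at hp hq
    refine h (measurableEmbedding_projRep.injective ?_)
    unfold wedge at hw
    rcases hp with hp | hp <;> rcases hq with hq | hq
    · ext i
      fin_cases i
      · simp [hp, hq]
      · simp only [hp, hq] at hw ⊢
        simp only [Fin.mk_one]
        linarith
    · simp [hp, hq] at hw
    · simp [hp, hq] at hw
    · rw [hp, hq]
  obtain ⟨k, hk⟩ := exists_nat_one_div_lt
    (show 0 < wedge (projRep p) (projRep q) ^ 2 /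
      (normSqPlane (projRep p) * normSqPlane (projRep q)) by positivity)
  refine ⟨k, ?_⟩
  rw [lt_div_iff₀ (by positivity)] at hk
  exact hk.le

lemma measurableSet_separated {Y : Type*} [MeasurableSpace Y] (ε : ℝ) {p q : Y → Proj 2}
    (hp : Measurable p) (hq : Measurable q) : MeasurableSet {y | Separated ε (p y) (q y)} := by
  have hp' := fun i => (measurable_pi_apply (X := fun _ => ℝ) i).comp (measurable_projRep.comp hp)
  have hq' := fun i => (measurable_pi_apply (X := fun _ => ℝ) i).comp (measurable_projRep.comp hq)
  refine measurableSet_le ?_ ?_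
  · exact ((((hp' 0).pow_const 2).add ((hp' 1).pow_const 2)).mul
      (((hq' 0).pow_const 2).add ((hq' 1).pow_const 2))).const_mul _
  · exact (((hp' 0).mul (hq' 1)).sub ((hp' 1).mul (hq' 0))).pow_const 2

lemma opNorm_le_of_normSqPlane_le {M : Matrix (Fin 2) (Fin 2) ℝ} {K : ℝ} (hK : 0 ≤ K)
    (h : ∀ v, normSqPlane (M.mulVec v) ≤ K ^ 2 * normSqPlane v) : opNorm M ≤ K := by
  refine ContinuousLinearMap.opNorm_le_bound _ hK fun x => ?_
  rw [← abs_of_nonneg (norm_nonneg _), ← abs_of_nonneg (mul_nonneg hK (norm_nonneg x)),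
    ← sq_le_sq, mul_pow, EuclideanSpace.real_norm_sq_eq, EuclideanSpace.real_norm_sq_eq,
    Fin.sum_univ_two, Fin.sum_univ_two]
  exact h x

/-- A matrix of determinant `±1` sending a pairwise separated triple of lines to another such
triple has norm bounded in terms of the separation. -/
lemma opNorm_le_of_separated {ε : ℝ} (hε : 0 < ε) (hε1 : ε ≤ 1) {B : GL (Fin 2) ℝ}
    (hB : (B : Matrix (Fin 2) (Fin 2) ℝ).det ^ 2 = 1) {p q r : Proj 2}
    (hpq : Separated ε p q) (hqr : Separated ε q r)
    (hpq' : Separated ε (projAction B p) (projAction B q))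
    (hpr' : Separated ε (projAction B p) (projAction B r))
    (hpr : Separated ε p r)
    (hqr' : Separated ε (projAction B q) (projAction B r)) :
    opNorm (B : Matrix (Fin 2) (Fin 2) ℝ) ≤ 2 / ε ^ 2 := by
  obtain ⟨u, hu, rfl⟩ := exists_eq_projMk p
  obtain ⟨v, hv, rfl⟩ := exists_eq_projMk q
  obtain ⟨w, hw, rfl⟩ := exists_eq_projMk r
  rw [projAction_projMk B hu, projAction_projMk B hv] at hpq'
  rw [projAction_projMk B hu, projAction_projMk B hw] at hpr'
  rw [projAction_projMk B hv, projAction_projMk B hw] at hqr'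
  have hBu := mulVec_ne_zero B hu
  have hBv := mulVec_ne_zero B hv
  have hBw := mulVec_ne_zero B hw
  rw [separated_projMk ‹_› ‹_›] at hpq hqr hpr hpq' hqr' hpr'
  set M := (B : Matrix (Fin 2) (Fin 2) ℝ) with hM
  have hdet : ∀ a b : Fin 2 → ℝ, wedge (M.mulVec a) (M.mulVec b) ^ 2 = wedge a b ^ 2 := by
    intro a b
    rw [← one_mul (wedge a b ^ 2), ← hB, ← mul_pow]
    congr 1
    simp [wedge, Matrix.det_fin_two, Matrix.mulVec, dotProduct, Fin.sum_univ_two]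
    ring
  rw [hdet] at hpq' hqr' hpr'
  have h1 := (hdet u v).symm.le.trans (wedge_sq_le _ _)
  have h2 := (hdet u w).symm.le.trans (wedge_sq_le _ _)
  have h3 := (hdet v w).symm.le.trans (wedge_sq_le _ _)
  have aux : ∀ {Q₁ Q₂ Q₃ R₁ R₂ R₃ : ℝ}, 0 < Q₁ → 0 < Q₂ → 0 < Q₃ → 0 < R₁ → 0 < R₂ → 0 < R₃ →
      ε * (R₁ * R₂) ≤ Q₁ * Q₂ → ε * (R₁ * R₃) ≤ Q₁ * Q₃ → ε * (Q₂ * Q₃) ≤ R₂ * R₃ →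
      ε ^ 2 * R₁ ≤ Q₁ := by
    intro Q₁ Q₂ Q₃ R₁ R₂ R₃ hQ₁ hQ₂ hQ₃ hR₁ hR₂ hR₃ h12 h13 h23
    have h : ε * (R₁ * R₂) * (ε * (R₁ * R₃)) ≤ Q₁ * Q₂ * (Q₁ * Q₃) :=
      mul_le_mul h12 h13 (by positivity) (by positivity)
    have h' : ε * (Q₁ * Q₂ * (Q₁ * Q₃)) ≤ Q₁ ^ 2 * (R₂ * R₃) := by
      nlinarith [mul_le_mul_of_nonneg_left h23 (sq_nonneg Q₁)]
    have h'' : ε ^ 3 * R₁ ^ 2 * (R₂ * R₃) ≤ Q₁ ^ 2 * (R₂ * R₃) := by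
      nlinarith [mul_le_mul_of_nonneg_left h hε.le]
    have h3 : ε ^ 3 * R₁ ^ 2 ≤ Q₁ ^ 2 := le_of_mul_le_mul_right h'' (by positivity)
    have h4 : ε ^ 4 * R₁ ^ 2 ≤ ε ^ 3 * R₁ ^ 2 := by
      refine mul_le_mul_of_nonneg_right ?_ (by positivity)
      exact pow_le_pow_of_le_one hε.le hε1 (by norm_num)
    exact le_of_sq_le_sq (by nlinarith) hQ₁.le
  have pu := normSqPlane_pos hu
  have pv := normSqPlane_pos hv
  have pw := normSqPlane_pos hw
  have qu := normSqPlane_pos hBu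
  have qv := normSqPlane_pos hBv
  have qw := normSqPlane_pos hBw
  have hRu : ε ^ 2 * normSqPlane (M.mulVec u) ≤ normSqPlane u :=
    aux pu pv pw qu qv qw (hpq'.trans (wedge_sq_le _ _)) (hpr'.trans (wedge_sq_le _ _))
      (hqr.trans h3)
  have hRv : ε ^ 2 * normSqPlane (M.mulVec v) ≤ normSqPlane v :=
    aux pv pu pw qv qu qw (by linarith [hpq'.trans (wedge_sq_le _ _)])
      (hqr'.trans (wedge_sq_le _ _)) (hpr.trans h2)
  refine opNorm_le_of_normSqPlane_le (by positivity) fun z => ?_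
  have hW : 0 < wedge u v ^ 2 := lt_of_lt_of_le (by positivity) hpq
  have hdecomp : wedge u v ^ 2 * normSqPlane (M.mulVec z) =
      normSqPlane (wedge z v • M.mulVec u + wedge u z • M.mulVec v) := by
    simp [normSqPlane, wedge, Matrix.mulVec, dotProduct, Fin.sum_univ_two]
    ring
  have hpar : ∀ (a b : ℝ) (x y : Fin 2 → ℝ), normSqPlane (a • x + b • y) ≤
      2 * a ^ 2 * normSqPlane x + 2 * b ^ 2 * normSqPlane y := by
    intro a b x y
    simp only [normSqPlane, Pi.add_apply, Pi.smul_apply, smul_eq_mul]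
    nlinarith [sq_nonneg (a * x 0 - b * y 0), sq_nonneg (a * x 1 - b * y 1)]
  have hz1 := wedge_sq_le z v
  have hz2 := wedge_sq_le u z
  have hz : 0 ≤ normSqPlane z := by unfold normSqPlane; positivity
  have e1 : ε ^ 2 * (wedge z v ^ 2 * normSqPlane (M.mulVec u)) ≤
      normSqPlane z * (normSqPlane u * normSqPlane v) := by
    have := mul_le_mul hz1 hRu (by positivity) (by positivity)
    linarith
  have e2 : ε ^ 2 * (wedge u z ^ 2 * normSqPlane (M.mulVec v)) ≤
      normSqPlane z * (normSqPlane u * normSqPlane v) := by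
    have := mul_le_mul hz2 hRv (by positivity) (by positivity)
    linarith
  have e3 : ε ^ 2 * (wedge u v ^ 2 * normSqPlane (M.mulVec z)) ≤
      4 * (normSqPlane z * (normSqPlane u * normSqPlane v)) := by
    rw [hdecomp]
    have := mul_le_mul_of_nonneg_left
      (hpar (wedge z v) (wedge u z) (M.mulVec u) (M.mulVec v)) (sq_nonneg ε)
    linarith
  have e4 : ε ^ 3 * (wedge u v ^ 2 * normSqPlane (M.mulVec z)) ≤
      wedge u v ^ 2 * (4 * normSqPlane z) := by
    have h5 := mul_le_mul_of_nonneg_left e3 hε.le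
    have h6 := mul_le_mul_of_nonneg_left hpq hz
    linarith
  have e5 : ε ^ 3 * normSqPlane (M.mulVec z) ≤ 4 * normSqPlane z := by
    refine le_of_mul_le_mul_left ?_ hW
    linarith
  have hMz : 0 ≤ normSqPlane (M.mulVec z) := by unfold normSqPlane; positivity
  have e6 : ε ^ 4 * normSqPlane (M.mulVec z) ≤ 4 * normSqPlane z := by
    refine le_trans (mul_le_mul_of_nonneg_right ?_ hMz) e5
    exact pow_le_pow_of_le_one hε.le hε1 (by norm_num)
  rw [div_pow, div_mul_eq_mul_div, le_div_iff₀ (by positivity)]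
  linarith

end ProjectiveLine

section Atoms

open ProbabilityTheory

variable {P : Type*} [MeasurableSpace P]

/-- A finite measure whose cube gives no mass to the triples of distinct points is carried by
two points. -/
lemma exists_measure_compl_pair_eq_zero [MeasurableEq P] [Nonempty P] {ν : Measure P}
    [IsFiniteMeasure ν]
    (h : ∀ᵐ z ∂(ν.prod (ν.prod ν)), ¬(z.1 ≠ z.2.1 ∧ z.1 ≠ z.2.2 ∧ z.2.1 ≠ z.2.2)) :
    ∃ p q, ν {p, q}ᶜ = 0 := by
  have h1 : ∀ᵐ p ∂ν, ∀ᵐ q ∂ν, ∀ᵐ r ∂ν, ¬(p ≠ q ∧ p ≠ r ∧ q ≠ r) := by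
    filter_upwards [Measure.ae_ae_of_ae_prod h] with p hp
    exact Measure.ae_ae_of_ae_prod hp
  by_cases h2 : ∀ᵐ p ∂ν, ∀ᵐ q ∂ν, p = q
  · rcases eq_zero_or_neZero ν with rfl | hν
    · exact ⟨Classical.arbitrary P, Classical.arbitrary P, by simp⟩
    · obtain ⟨p, hp⟩ := h2.exists
      refine ⟨p, p, ?_⟩
      rw [← mem_ae_iff]
      filter_upwards [hp] with q hq
      simp [hq]
  · obtain ⟨p, hp, hp'⟩ := ((not_eventually.1 h2).and_eventually h1).exists
    obtain ⟨q, hq, hq'⟩ := ((not_eventually.1 hp).and_eventually hp').exists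
    refine ⟨p, q, ?_⟩
    rw [← mem_ae_iff]
    filter_upwards [hq'] with r hr
    simp only [Set.mem_insert_iff, Set.mem_singleton_iff]
    grind

/-- A measure carried by two distinct points is a combination of Dirac masses. -/
lemma eq_smul_dirac_add_smul_dirac [MeasurableSingletonClass P] {ν : Measure P} {p q : P}
    (hpq : p ≠ q) (h : ν {p, q}ᶜ = 0) :
    ν = ν {p} • Measure.dirac p + ν {q} • Measure.dirac q := by
  classical
  ext s hs
  have h1 : ν s = ν (s ∩ {p, q}) := by
    rw [← measure_inter_add_sdiff s (Set.toFinite {p, q}).measurableSet,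
      measure_mono_null (show s \ {p, q} ⊆ {p, q}ᶜ from fun x hx => hx.2) h, add_zero]
  have h2 : s ∩ {p, q} = (s ∩ {p}) ∪ (s ∩ {q}) := by
    rw [← Set.inter_union_distrib_left]; rfl
  rw [h1, h2, measure_union _ (hs.inter (measurableSet_singleton q))]
  · have h3 : ∀ r, ν (s ∩ {r}) = ν {r} * s.indicator 1 r := by
      intro r
      by_cases hr : r ∈ s
      · simp [hr]
      · simp [hr]
    simp [h3, hs]
  · exact (Set.disjoint_singleton.2 hpq).mono Set.inter_subset_right Set.inter_subset_right

lemma measure_pair_eq_one [MeasurableSingletonClass P] {ν : Measure P} [IsProbabilityMeasure ν]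
    {p q : P} (hpq : p ≠ q) (h : ν {p, q}ᶜ = 0) : ν {p} + ν {q} = 1 := by
  have h1 := congrArg (fun m : Measure P => m Set.univ) (eq_smul_dirac_add_smul_dirac hpq h)
  simpa using h1.symm

lemma eq_dirac_of_measure_compl_eq_zero [MeasurableSingletonClass P] {ν : Measure P}
    [IsProbabilityMeasure ν] {p : P} (h : ν {p}ᶜ = 0) : ν = Measure.dirac p := by
  have h1 : (fun q : P => q) =ᵐ[ν] fun _ => p := by
    rw [Filter.EventuallyEq, ae_iff]; exact h
  have h2 : ν.map (fun q : P => q) = ν.map fun _ => p := Measure.map_congr h1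
  simpa using h2

lemma mem_of_measure_compl_eq_zero {ν : Measure P} {s : Set P} {p : P} (h : ν sᶜ = 0)
    (hp : 0 < ν {p}) : p ∈ s := by
  by_contra hps
  exact hp.ne' (measure_mono_null (by simpa using hps) h)

variable {X : Type*} [MeasurableSpace X]

/-- The smallest level `φ p` of an atom. -/
lemma exists_measurable_lower_atom [StandardBorelSpace P] [Nonempty P] (κ : Kernel X P)
    {φ : P → EReal} (hφ : MeasurableEmbedding φ) :
    ∃ a : X → P, Measurable a ∧ ∀ x p q, κ x {p, q}ᶜ = 0 → 0 < κ x {p} → φ p ≤ φ q → a x = p := by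
  classical
  obtain ⟨ψ, hψ, hψφ⟩ := hφ.exists_measurable_extend measurable_id fun _ => inferInstance
  let m : X → EReal := fun x => ⨅ t : ℚ, if 0 < κ x (φ ⁻¹' Set.Iic ((t : ℝ) : EReal)) then
    ((t : ℝ) : EReal) else ⊤
  have hm : Measurable m := by
    refine .iInf fun t => Measurable.ite ?_ measurable_const measurable_const
    exact measurableSet_lt measurable_const
      (κ.measurable_coe (hφ.measurable measurableSet_Iic))
  refine ⟨ψ ∘ m, hψ.comp hm, fun x p q h0 hp hpq => ?_⟩
  have hmx : m x = φ p := by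
    refine le_antisymm ?_ (le_iInf fun t => ?_)
    · by_contra! hlt
      obtain ⟨t, ht, htm⟩ := EReal.lt_iff_exists_rat_btwn.1 hlt
      refine htm.not_ge ((iInf_le _ t).trans_eq (if_pos (hp.trans_le (measure_mono ?_))))
      rintro r rfl
      exact ht.le
    · split_ifs with ht
      · by_contra! hlt
        refine ht.ne' (measure_mono_null ?_ h0)
        rintro r hr (rfl | rfl)
        · exact absurd (lt_of_le_of_lt hr hlt) (lt_irrefl _)
        · exact absurd (lt_of_le_of_lt (hpq.trans hr) hlt) (lt_irrefl _)
      · exact le_top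
  have := congrFun hψφ p
  simpa [hmx] using this

/-- The atoms of a kernel can be selected measurably when there are at most two of them. -/
lemma exists_measurable_atoms [StandardBorelSpace P] [Nonempty P] (κ : Kernel X P) :
    ∃ a b : X → P, Measurable a ∧ Measurable b ∧ ∀ x, κ x ≠ 0 → (∃ p q, κ x {p, q}ᶜ = 0) →
      κ x {a x, b x}ᶜ = 0 ∧ 0 < κ x {a x} ∧ 0 < κ x {b x} := by
  have hE := measurableEmbedding_embeddingReal P
  obtain ⟨a, ha, ha'⟩ := exists_measurable_lower_atom κ (EReal.measurableEmbedding_coe.comp hE)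
  obtain ⟨b, hb, hb'⟩ := exists_measurable_lower_atom κ
    (EReal.measurableEmbedding_coe.comp ((MeasurableEquiv.neg ℝ).measurableEmbedding.comp hE))
  refine ⟨a, b, ha, hb, fun x hx h => ?_⟩
  have hsing : ∀ p, κ x {p}ᶜ = 0 → 0 < κ x {p} := by
    intro p hp
    refine pos_iff_ne_zero.2 fun h0 => hx ?_
    rw [← Measure.measure_univ_eq_zero, ← Set.union_compl_self {p}]
    exact measure_union_null h0 hp
  have hpos : ∃ p q, κ x {p, q}ᶜ = 0 ∧ 0 < κ x {p} ∧ 0 < κ x {q} := by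
    obtain ⟨p, q, hpq⟩ := h
    have hdrop : ∀ p q, κ x {p, q}ᶜ = 0 → κ x {q} = 0 → κ x {p}ᶜ = 0 := by
      intro p q hpq hq
      refine measure_mono_null (t := {p, q}ᶜ ∪ {q}) (fun r hr => ?_) (measure_union_null hpq hq)
      by_cases h : r = q
      · exact Or.inr h
      · exact Or.inl (by simpa using ⟨hr, h⟩)
    rcases eq_or_ne (κ x {q}) 0 with hq | hq
    · have hp := hdrop p q hpq hq
      exact ⟨p, p, by simpa using hp, hsing p hp, hsing p hp⟩
    · rcases eq_or_ne (κ x {p}) 0 with hp | hp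
      · have hq := hdrop q p (by rwa [Set.pair_comm]) hp
        exact ⟨q, q, by simpa using hq, hsing q hq, hsing q hq⟩
      · exact ⟨p, q, hpq, pos_iff_ne_zero.2 hp, pos_iff_ne_zero.2 hq⟩
  obtain ⟨p, q, hpq, hp, hq, hle⟩ : ∃ p q, κ x {p, q}ᶜ = 0 ∧ 0 < κ x {p} ∧ 0 < κ x {q} ∧
      embeddingReal P p ≤ embeddingReal P q := by
    obtain ⟨p, q, hpq, hp, hq⟩ := hpos
    rcases le_total (embeddingReal P p) (embeddingReal P q) with hle | hle
    · exact ⟨p, q, hpq, hp, hq, hle⟩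
    · exact ⟨q, p, by rwa [Set.pair_comm], hq, hp, hle⟩
  have hap : a x = p := ha' x p q hpq hp (EReal.coe_le_coe_iff.2 hle)
  have hbq : b x = q := hb' x q p (by rwa [Set.pair_comm]) hq
    (EReal.coe_le_coe_iff.2 (neg_le_neg hle))
  rw [hap, hbq]
  exact ⟨hpq, hp, hq⟩

lemma measurable_kernel_singleton [MeasurableEq P] (κ : Kernel X P) [IsFiniteKernel κ]
    {a : X → P} (ha : Measurable a) : Measurable fun x => κ x {a x} := by
  have h : MeasurableSet {z : X × P | z.2 = a z.1} :=
    measurableSet_eq_fun measurable_snd (ha.comp measurable_fst)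
  exact Kernel.measurable_kernel_prodMk_left h

lemma compProd_eq_smul_map_add_smul_map {μ : Measure X} [SFinite μ] {κ : Kernel X P}
    [IsSFiniteKernel κ] {a b : X → P} (ha : Measurable a) (hb : Measurable b) {c d : ℝ≥0∞}
    (h : ∀ᵐ x ∂μ, κ x = c • Measure.dirac (a x) + d • Measure.dirac (b x)) :
    μ.compProd κ = c • μ.map (fun x => (x, a x)) + d • μ.map (fun x => (x, b x)) := by
  ext s hs
  have hga : Measurable fun x => (x, a x) := measurable_id.prodMk ha
  have hgb : Measurable fun x => (x, b x) := measurable_id.prodMk hb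
  have h1 : ∀ g : X → P, Measurable g → ∫⁻ x, Measure.dirac (g x) (Prod.mk x ⁻¹' s) ∂μ =
      μ ((fun x => (x, g x)) ⁻¹' s) := by
    intro g hg
    have hgs : MeasurableSet ((fun x => (x, g x)) ⁻¹' s) := (measurable_id.prodMk hg) hs
    rw [← lintegral_indicator_one hgs]
    refine lintegral_congr fun x => ?_
    rw [Measure.dirac_apply' _ (measurable_prodMk_left hs)]
    rfl
  have hm : ∀ g : X → P, Measurable g →
      Measurable fun x => Measure.dirac (g x) (Prod.mk x ⁻¹' s) := by
    intro g hg
    exact Kernel.measurable_kernel_prodMk_left (κ := Kernel.deterministic g hg) hs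
  rw [Measure.compProd_apply hs]
  calc ∫⁻ x, κ x (Prod.mk x ⁻¹' s) ∂μ
      = ∫⁻ x, (c * Measure.dirac (a x) (Prod.mk x ⁻¹' s) +
          d * Measure.dirac (b x) (Prod.mk x ⁻¹' s)) ∂μ := by
        refine lintegral_congr_ae ?_
        filter_upwards [h] with x hx
        simp [hx]
    _ = _ := by
        rw [lintegral_add_left ((hm a ha).const_mul c), lintegral_const_mul _ (hm a ha),
          lintegral_const_mul _ (hm b hb), h1 a ha, h1 b hb, Measure.add_apply,
          Measure.smul_apply, Measure.smul_apply, Measure.map_apply hga hs,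
          Measure.map_apply hgb hs, smul_eq_mul, smul_eq_mul]

end Atoms

section Equivariance

open ProbabilityTheory

variable {X : Type*} {f : X → X} {A : X → GL (Fin 2) ℝ}

/-- The projective action of a cocycle on triples of points of the projective line. -/
noncomputable def tripleAction (f : X → X) (A : X → GL (Fin 2) ℝ)
    (z : X × Proj 2 × Proj 2 × Proj 2) : X × Proj 2 × Proj 2 × Proj 2 :=
  (f z.1, Prod.map (projAction (A z.1))
    (Prod.map (projAction (A z.1)) (projAction (A z.1))) z.2)

lemma tripleAction_iterate (n : ℕ) (z : X × Proj 2 × Proj 2 × Proj 2) :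
    (tripleAction f A)^[n] z = (f^[n] z.1, Prod.map (projAction (cocycleIter f A n z.1))
      (Prod.map (projAction (cocycleIter f A n z.1))
        (projAction (cocycleIter f A n z.1))) z.2) := by
  induction n generalizing z with
  | zero => simp [cocycleIter, projAction_one, Prod.map]
  | succ n ih =>
    rw [Function.iterate_succ_apply, ih]
    simp [cocycleIter, projAction_mul, tripleAction, Prod.map]

lemma det_cocycleIter_sq (hdet : ∀ x, (A x : Matrix (Fin 2) (Fin 2) ℝ).det ^ 2 = 1) (n : ℕ)
    (x : X) : ((cocycleIter f A n x : GL (Fin 2) ℝ) : Matrix (Fin 2) (Fin 2) ℝ).det ^ 2 = 1 := by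
  induction n generalizing x with
  | zero => simp [cocycleIter]
  | succ n ih => rw [cocycleIter, Units.val_mul, Matrix.det_mul, mul_pow, ih, hdet, one_mul]

variable [MeasurableSpace X] {μ : Measure X}

/-- A kernel to the projective line which is equivariant under a cocycle. -/
def KernelEquivariant (μ : Measure X) (f : X → X) (A : X → GL (Fin 2) ℝ)
    (κ : Kernel X (Proj 2)) : Prop :=
  ∀ᵐ x ∂μ, κ (f x) = (κ x).map (projAction (A x))

lemma measurable_projAction_right (B : GL (Fin 2) ℝ) : Measurable (projAction B) :=
  measurable_projAction measurable_const measurable_id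

lemma KernelEquivariant.add {κ κ' : Kernel X (Proj 2)} (h : KernelEquivariant μ f A κ)
    (h' : KernelEquivariant μ f A κ') : KernelEquivariant μ f A (κ + κ') := by
  filter_upwards [h, h'] with x hx hx'
  rw [add_apply, add_apply, hx, hx',
    Measure.map_add _ _ (measurable_projAction_right _)]

lemma measurable_tripleAction (hf : Measurable f)
    (hA : Measurable fun x => (A x : Matrix (Fin 2) (Fin 2) ℝ)) :
    Measurable (tripleAction f A) := by
  have hA' : Measurable fun z : X × Proj 2 × Proj 2 × Proj 2 =>
      (A z.1 : Matrix (Fin 2) (Fin 2) ℝ) := hA.comp measurable_fst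
  exact (hf.comp measurable_fst).prodMk
    ((measurable_projAction hA' (measurable_fst.comp measurable_snd)).prodMk
      ((measurable_projAction hA' (measurable_fst.comp (measurable_snd.comp measurable_snd))).prodMk
        (measurable_projAction hA' (measurable_snd.comp (measurable_snd.comp measurable_snd)))))

lemma measurePreserving_tripleAction [SFinite μ] (hf : MeasurePreserving f μ μ)
    (hA : Measurable fun x => (A x : Matrix (Fin 2) (Fin 2) ℝ))
    {κ : Kernel X (Proj 2)} [IsFiniteKernel κ] (hκ : KernelEquivariant μ f A κ) :
    MeasurePreserving (tripleAction f A) (μ.compProd (κ.prod (κ.prod κ)))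
      (μ.compProd (κ.prod (κ.prod κ))) := by
  have hT := measurable_tripleAction hf.measurable hA
  refine ⟨hT, ?_⟩
  ext s hs
  rw [Measure.map_apply hT hs, Measure.compProd_apply (hT hs), Measure.compProd_apply hs]
  conv_rhs => rw [← hf.map_eq]
  rw [lintegral_map (Kernel.measurable_kernel_prodMk_left hs) hf.measurable]
  refine lintegral_congr_ae ?_
  filter_upwards [hκ] with x hx
  have hm := measurable_projAction_right (A x)
  rw [Kernel.prod_apply, Kernel.prod_apply, Kernel.prod_apply, Kernel.prod_apply, hx,
    Measure.map_prod_map _ _ hm hm, Measure.map_prod_map _ _ hm (hm.prodMap hm),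
    Measure.map_apply (hm.prodMap (hm.prodMap hm)) (measurable_prodMk_left hs)]
  rfl

/-- For an essentially unbounded cocycle, equivariant kernels are carried by two points. -/
lemma KernelEquivariant.exists_pair [IsFiniteMeasure μ] (hf : MeasurePreserving f μ μ)
    (hA : Measurable fun x => (A x : Matrix (Fin 2) (Fin 2) ℝ))
    (hdet : ∀ x, (A x : Matrix (Fin 2) (Fin 2) ℝ).det ^ 2 = 1)
    (hunb : ∀ᵐ x ∂μ, ConvergesEssentiallyToInfinity fun n =>
      opNorm ((cocycleIter f A n x : GL (Fin 2) ℝ) : Matrix (Fin 2) (Fin 2) ℝ))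
    {κ : Kernel X (Proj 2)} [IsFiniteKernel κ] (hκ : KernelEquivariant μ f A κ) :
    ∀ᵐ x ∂μ, ∃ p q, κ x {p, q}ᶜ = 0 := by
  let G : ℝ → Set (X × Proj 2 × Proj 2 × Proj 2) := fun ε =>
    {z | Separated ε z.2.1 z.2.2.1 ∧ Separated ε z.2.1 z.2.2.2 ∧ Separated ε z.2.2.1 z.2.2.2}
  have h1 : Measurable fun z : X × Proj 2 × Proj 2 × Proj 2 => z.2.1 :=
    measurable_fst.comp measurable_snd
  have h2 : Measurable fun z : X × Proj 2 × Proj 2 × Proj 2 => z.2.2.1 :=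
    measurable_fst.comp (measurable_snd.comp measurable_snd)
  have h3 : Measurable fun z : X × Proj 2 × Proj 2 × Proj 2 => z.2.2.2 :=
    measurable_snd.comp (measurable_snd.comp measurable_snd)
  have hG : ∀ ε, MeasurableSet (G ε) := fun ε => (measurableSet_separated ε h1 h2).inter
    ((measurableSet_separated ε h1 h3).inter (measurableSet_separated ε h2 h3))
  have hunb' : ∀ᵐ z ∂(μ.compProd (κ.prod (κ.prod κ))), ConvergesEssentiallyToInfinity fun n =>
      opNorm ((cocycleIter f A n z.1 : GL (Fin 2) ℝ) : Matrix (Fin 2) (Fin 2) ℝ) := by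
    obtain ⟨s, hbad, hs, hs0⟩ := exists_measurable_superset_of_null (ae_iff.1 hunb)
    filter_upwards [Measure.ae_compProd_of_ae_fst (κ.prod (κ.prod κ)) (p := fun x => x ∉ s)
      hs.compl (measure_eq_zero_iff_ae_notMem.1 hs0)] with z hz
    by_contra hcon
    exact hz (hbad hcon)
  have hnull : ∀ k : ℕ, μ.compProd (κ.prod (κ.prod κ)) (G (1 / ((k : ℝ) + 1))) = 0 := by
    intro k
    have hε : 0 < 1 / ((k : ℝ) + 1) := by positivity
    have hε1 : 1 / ((k : ℝ) + 1) ≤ 1 := by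
      rw [div_le_one (by positivity)]
      linarith [(Nat.cast_nonneg k : (0 : ℝ) ≤ k)]
    refine measure_eq_zero_of_lowerDensity_returns (measurePreserving_tripleAction hf hA hκ)
      (hG _) ?_
    filter_upwards [hunb'] with z hz hzG
    refine ⟨_, hz (2 / (1 / ((k : ℝ) + 1)) ^ 2) (by positivity), fun n hn => ?_⟩
    rw [tripleAction_iterate] at hn
    exact opNorm_le_of_separated hε hε1 (det_cocycleIter_sq hdet n z.1) hzG.1 hzG.2.2
      hn.1 hn.2.1 hzG.2.1 hn.2.2
  have hae : ∀ᵐ z ∂(μ.compProd (κ.prod (κ.prod κ))),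
      ¬(z.2.1 ≠ z.2.2.1 ∧ z.2.1 ≠ z.2.2.2 ∧ z.2.2.1 ≠ z.2.2.2) := by
    have hall : ∀ᵐ z ∂(μ.compProd (κ.prod (κ.prod κ))), ∀ k : ℕ, z ∉ G (1 / ((k : ℝ) + 1)) :=
      ae_all_iff.2 fun k => measure_eq_zero_iff_ae_notMem.1 (hnull k)
    filter_upwards [hall] with z hz ⟨hpq, hpr, hqr⟩
    obtain ⟨i, hi⟩ := exists_separated hpq
    obtain ⟨j, hj⟩ := exists_separated hpr
    obtain ⟨l, hl⟩ := exists_separated hqr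
    exact hz (max i (max j l))
      ⟨hi.mono (Nat.one_div_le_one_div (le_max_left _ _)),
        hj.mono (Nat.one_div_le_one_div ((le_max_left _ _).trans (le_max_right _ _))),
        hl.mono (Nat.one_div_le_one_div ((le_max_right _ _).trans (le_max_right _ _)))⟩
  filter_upwards [Measure.ae_ae_of_ae_compProd hae] with x hx
  rw [Kernel.prod_apply, Kernel.prod_apply] at hx
  exact exists_measure_compl_pair_eq_zero hx

/-- An invariant measure disintegrates into an equivariant kernel. -/
lemma exists_kernelEquivariant [StandardBorelSpace X] [IsFiniteMeasure μ]
    (hbij : Function.Bijective f)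
    (hf : MeasurePreserving f μ μ) (hA : Measurable fun x => (A x : Matrix (Fin 2) (Fin 2) ℝ))
    {μhat : Measure (X × Proj 2)} [IsFiniteMeasure μhat] (hfst : μhat.map Prod.fst = μ)
    (hinv : μhat.map (fun q : X × Proj 2 => (f q.1, projAction (A q.1) q.2)) = μhat) :
    ∃ κ : Kernel X (Proj 2), IsMarkovKernel κ ∧ μ.compProd κ = μhat ∧
      KernelEquivariant μ f A κ := by
  have hdis : μ.compProd μhat.condKernel = μhat := by
    rw [← hfst]; exact μhat.disintegrate μhat.condKernel
  refine ⟨μhat.condKernel, inferInstance, hdis, ?_⟩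
  set κ := μhat.condKernel
  have hpA : Measurable fun q : X × Proj 2 => projAction (A q.1) q.2 :=
    measurable_projAction (hA.comp measurable_fst) measurable_snd
  have hF : Measurable fun q : X × Proj 2 => (f q.1, projAction (A q.1) q.2) :=
    (hf.measurable.comp measurable_fst).prodMk hpA
  let κA : Kernel X (Proj 2) := (Kernel.id.prod κ).map fun q => projAction (A q.1) q.2
  have hκA : ∀ x, κA x = (κ x).map (projAction (A x)) := by
    intro x
    rw [Kernel.map_apply _ hpA, Kernel.prod_apply, Kernel.id_apply, Measure.dirac_prod,
      Measure.map_map hpA measurable_prodMk_left]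
    rfl
  have hfin : IsFiniteKernel κA := Kernel.IsFiniteKernel.map _ _
  have hprod : MeasurableEmbedding (Prod.map f (id : Proj 2 → Proj 2)) :=
    (hf.measurable.measurableEmbedding hbij.injective).prodMap .id
  have heq : μ.compProd (κ.comap f hf.measurable) = μ.compProd κA := by
    ext s hs
    set t := Prod.map f (id : Proj 2 → Proj 2) '' s with ht
    have htm : MeasurableSet t := hprod.measurableSet_image.2 hs
    have hst : s = Prod.map f id ⁻¹' t := (Set.preimage_image_eq s hprod.injective).symm
    have hl : μ.compProd (κ.comap f hf.measurable) s = μhat t := by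
      rw [Measure.compProd_apply hs, ← hdis, Measure.compProd_apply htm]
      conv_rhs => rw [← hf.map_eq]
      rw [lintegral_map (Kernel.measurable_kernel_prodMk_left htm) hf.measurable]
      refine lintegral_congr fun x => ?_
      rw [Kernel.comap_apply, hst]
      rfl
    have hr : μ.compProd κA s = μhat t := by
      rw [Measure.compProd_apply hs, ← hinv, Measure.map_apply hF htm, ← hdis,
        Measure.compProd_apply (hF htm)]
      refine lintegral_congr fun x => ?_
      rw [hκA, Measure.map_apply (measurable_projAction_right _) (measurable_prodMk_left hs), hst]
      rfl
    rw [hl, hr]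
  filter_upwards [Kernel.ae_eq_of_compProd_eq heq] with x hx
  rw [← hκA, ← hx, Kernel.comap_apply]

end Equivariance

section Ergodic

open ProbabilityTheory

variable {X : Type*} [MeasurableSpace X] {μ : Measure X} {f : X → X} {A : X → GL (Fin 2) ℝ}

/-- An almost everywhere invariant property which agrees almost everywhere with a measurable set
holds almost everywhere or almost nowhere. -/
lemma Ergodic.ae_or_ae_not (herg : Ergodic f μ) {p : X → Prop} {s : Set X} (hs : MeasurableSet s)
    (hps : ∀ᵐ x ∂μ, p x ↔ x ∈ s) (hp : ∀ᵐ x ∂μ, p (f x) ↔ p x) :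
    (∀ᵐ x ∂μ, p x) ∨ ∀ᵐ x ∂μ, ¬p x := by
  have hinv : f ⁻¹' s =ᵐ[μ] s := by
    filter_upwards [hps, hp, herg.quasiMeasurePreserving.ae hps] with x h1 h2 h3
    exact propext ((h3.symm.trans h2).trans h1)
  rcases herg.quasiErgodic.ae_mem_or_ae_notMem₀ hs.nullMeasurableSet hinv with h | h
  · left
    filter_upwards [h, hps] with x h1 h2 using h2.2 h1
  · right
    filter_upwards [h, hps] with x h1 h2 using fun h3 => h1 (h2.1 h3)

lemma map_projAction_singleton (B : GL (Fin 2) ℝ) (ν : Measure (Proj 2)) (p : Proj 2) :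
    ν.map (projAction B) {projAction B p} = ν {p} := by
  rw [Measure.map_apply (measurable_projAction_right B) (measurableSet_singleton _),
    ← Set.image_singleton, Set.preimage_image_eq _ (projAction_injective B)]

lemma map_projAction_compl_singleton (B : GL (Fin 2) ℝ) (ν : Measure (Proj 2)) (p : Proj 2) :
    ν.map (projAction B) {projAction B p}ᶜ = ν {p}ᶜ := by
  rw [Measure.map_apply (measurable_projAction_right B) (measurableSet_singleton _).compl,
    Set.preimage_compl, ← Set.image_singleton, Set.preimage_image_eq _ (projAction_injective B)]

lemma projAction_surjective (B : GL (Fin 2) ℝ) : Function.Surjective (projAction B) := fun p =>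
  ⟨projAction B⁻¹ p, by rw [← projAction_mul, mul_inv_cancel, projAction_one]⟩

lemma ae_exists_compl_singleton_or [IsFiniteMeasure μ] (herg : Ergodic f μ)
    {κ : Kernel X (Proj 2)} [IsFiniteKernel κ] (hκ : KernelEquivariant μ f A κ)
    (hpair : ∀ᵐ x ∂μ, ∃ p q, κ x {p, q}ᶜ = 0) :
    (∀ᵐ x ∂μ, ∃ p, κ x {p}ᶜ = 0) ∨ ∀ᵐ x ∂μ, ¬∃ p, κ x {p}ᶜ = 0 := by
  obtain ⟨a, b, ha, hb, hab⟩ := exists_measurable_atoms κ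
  have hzero : MeasurableSet {x | κ x Set.univ = 0} :=
    (κ.measurable_coe MeasurableSet.univ) (measurableSet_singleton 0)
  refine herg.ae_or_ae_not (hzero.union (measurableSet_eq_fun ha hb)) ?_ ?_
  · filter_upwards [hpair] with x hx
    simp only [Set.mem_union, Set.mem_ofPred_eq, Measure.measure_univ_eq_zero]
    constructor
    · rintro ⟨p, hp⟩
      refine or_iff_not_imp_left.2 fun h0 => ?_
      obtain ⟨-, h1, h2⟩ := hab x h0 hx
      rw [mem_of_measure_compl_eq_zero hp h1, mem_of_measure_compl_eq_zero hp h2]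
    · intro h
      by_cases h0 : κ x = 0
      · exact ⟨a x, by simp [h0]⟩
      · obtain ⟨h1, -, -⟩ := hab x h0 hx
        refine ⟨a x, ?_⟩
        rwa [← h.resolve_left h0, Set.pair_eq_singleton] at h1
  · filter_upwards [hκ] with x hx
    rw [hx, (projAction_surjective (A x)).exists]
    simp only [map_projAction_compl_singleton]

lemma ae_exists_half_lt_or (herg : Ergodic f μ)
    {κ : Kernel X (Proj 2)} [IsFiniteKernel κ] (hκ : KernelEquivariant μ f A κ)
    {a b : X → Proj 2} (ha : Measurable a) (hb : Measurable b)
    (hab : ∀ᵐ x ∂μ, κ x {a x, b x}ᶜ = 0) :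
    (∀ᵐ x ∂μ, ∃ p, 1 / 2 < κ x {p}) ∨ ∀ᵐ x ∂μ, ¬∃ p, 1 / 2 < κ x {p} := by
  refine herg.ae_or_ae_not (s := {x | 1 / 2 < κ x {a x}} ∪ {x | 1 / 2 < κ x {b x}})
    ((measurableSet_lt measurable_const (measurable_kernel_singleton κ ha)).union
      (measurableSet_lt measurable_const (measurable_kernel_singleton κ hb))) ?_ ?_
  · filter_upwards [hab] with x hx
    constructor
    · rintro ⟨p, hp⟩
      rcases mem_of_measure_compl_eq_zero hx (bot_le.trans_lt hp) with rfl | rfl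
      · exact Or.inl hp
      · exact Or.inr hp
    · rintro (h | h)
      · exact ⟨_, h⟩
      · exact ⟨_, h⟩
  · filter_upwards [hκ] with x hx
    rw [hx, (projAction_surjective (A x)).exists]
    simp only [map_projAction_singleton]

/-- If an equivariant family of measures is not carried by single points, then it determines
two points carrying every other equivariant family. -/
lemma exists_common_atoms [IsFiniteMeasure μ] (herg : Ergodic f μ)
    (hpair : ∀ κ : Kernel X (Proj 2), IsFiniteKernel κ → KernelEquivariant μ f A κ →
      ∀ᵐ x ∂μ, ∃ p q, κ x {p, q}ᶜ = 0)
    {κ₀ : Kernel X (Proj 2)} [IsFiniteKernel κ₀] (hκ₀ : KernelEquivariant μ f A κ₀)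
    (hne : ¬∀ᵐ x ∂μ, ∃ p, κ₀ x {p}ᶜ = 0) :
    ∃ a b : X → Proj 2, Measurable a ∧ Measurable b ∧ (∀ᵐ x ∂μ, a x ≠ b x) ∧
      ∀ κ : Kernel X (Proj 2), IsFiniteKernel κ → KernelEquivariant μ f A κ →
        ∀ᵐ x ∂μ, κ x {a x, b x}ᶜ = 0 := by
  have hne' := (ae_exists_compl_singleton_or herg hκ₀ (hpair κ₀ inferInstance hκ₀)).resolve_left hne
  obtain ⟨a, b, ha, hb, hab⟩ := exists_measurable_atoms κ₀
  have hatoms : ∀ᵐ x ∂μ, a x ≠ b x ∧ 0 < κ₀ x {a x} ∧ 0 < κ₀ x {b x} := by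
    filter_upwards [hne', hpair κ₀ inferInstance hκ₀] with x hx hx'
    have h0 : κ₀ x ≠ 0 := fun h0 => hx ⟨a x, by simp [h0]⟩
    obtain ⟨h1, h2, h3⟩ := hab x h0 hx'
    refine ⟨fun h => hx ⟨a x, ?_⟩, h2, h3⟩
    rwa [← h, Set.pair_eq_singleton] at h1
  refine ⟨a, b, ha, hb, hatoms.mono fun x hx => hx.1, fun κ _ hκ => ?_⟩
  filter_upwards [hatoms, hpair (κ + κ₀) inferInstance (hκ.add hκ₀)] with x ⟨hx, h1, h2⟩ ⟨p, q, hpq⟩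
  rw [add_apply, Measure.add_apply, add_eq_zero] at hpq
  have hap := mem_of_measure_compl_eq_zero hpq.2 h1
  have hbp := mem_of_measure_compl_eq_zero hpq.2 h2
  have hset : ({a x, b x} : Set (Proj 2)) = {p, q} := by
    rcases hap with hap | hap <;> rcases hbp with hbp | hbp
    · exact absurd (hap.trans hbp.symm) hx
    · rw [hap, hbp]
    · rw [hap, hbp, Set.pair_comm]
    · exact absurd (hap.trans hbp.symm) hx
  rw [hset]
  exact hpq.1

/-- If the equivariant family of measures `κ` carried by `{a, b}` gives unequal weights to its
two atoms, then `a` and `b` can be exchanged pointwise so that `a` becomes equivariant. -/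
lemma exists_equivariant_reordering {κ : Kernel X (Proj 2)} [IsMarkovKernel κ]
    (hf : MeasurePreserving f μ μ)
    (hκ : KernelEquivariant μ f A κ) {a b : X → Proj 2} (ha : Measurable a) (hb : Measurable b)
    (hne : ∀ᵐ x ∂μ, a x ≠ b x)
    (hab : ∀ᵐ x ∂μ, κ x {a x, b x}ᶜ = 0) (hhalf : ∀ᵐ x ∂μ, ∃ p, 1 / 2 < κ x {p}) :
    ∃ a' b' : X → Proj 2, Measurable a' ∧ Measurable b' ∧ (∀ᵐ x ∂μ, a' x ≠ b' x) ∧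
      (∀ x, ({a' x, b' x} : Set (Proj 2)) = {a x, b x}) ∧
      ∀ᵐ x ∂μ, a' (f x) = projAction (A x) (a' x) := by
  classical
  let s : Set X := {x | 1 / 2 < κ x {a x}}
  have hs : MeasurableSet s := measurableSet_lt measurable_const (measurable_kernel_singleton κ ha)
  let a' : X → Proj 2 := fun x => if x ∈ s then a x else b x
  let b' : X → Proj 2 := fun x => if x ∈ s then b x else a x
  have hset : ∀ x, ({a' x, b' x} : Set (Proj 2)) = {a x, b x} := by
    intro x
    by_cases hx : x ∈ s
    · simp [a', b', hx]
    · simp [a', b', hx, Set.pair_comm]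
  have hunique : ∀ᵐ x ∂μ, ∀ p, 1 / 2 < κ x {p} ↔ p = a' x := by
    filter_upwards [hne, hab, hhalf] with x hx hx' ⟨q, hq⟩
    have hsum := measure_pair_eq_one hx hx'
    have hexcl : ¬(1 / 2 < κ x {a x} ∧ 1 / 2 < κ x {b x}) := by
      rintro ⟨h1, h2⟩
      have h3 := ENNReal.add_lt_add h1 h2
      rw [hsum, ENNReal.add_halves] at h3
      exact lt_irrefl _ h3
    have hmem : ∀ p, 1 / 2 < κ x {p} → p = a x ∨ p = b x := fun p hp =>
      mem_of_measure_compl_eq_zero (s := {a x, b x}) hx' (bot_le.trans_lt hp)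
    by_cases hxs : x ∈ s
    · have ha'x : a' x = a x := if_pos hxs
      rw [ha'x]
      intro p
      refine ⟨fun hp => (hmem p hp).resolve_right ?_, ?_⟩
      · rintro rfl
        exact hexcl ⟨hxs, hp⟩
      · rintro rfl
        exact hxs
    · have ha'x : a' x = b x := if_neg hxs
      rw [ha'x]
      have hbq : ∀ p, 1 / 2 < κ x {p} → p = b x := by
        intro p hp
        refine (hmem p hp).resolve_left ?_
        rintro rfl
        exact hxs hp
      intro p
      refine ⟨hbq p, ?_⟩
      rintro rfl
      rwa [← hbq q hq]
  refine ⟨a', b', Measurable.ite hs ha hb, Measurable.ite hs hb ha, ?_, hset, ?_⟩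
  · filter_upwards [hne] with x hx
    by_cases hxs : x ∈ s
    · simpa [a', b', hxs] using hx
    · simpa [a', b', hxs] using hx.symm
  · filter_upwards [hunique, hf.quasiMeasurePreserving.ae hunique, hκ] with x h1 h2 h3
    refine ((h2 _).1 ?_).symm
    rw [h3, map_projAction_singleton]
    exact (h1 _).2 rfl

end Ergodic

/-- For an essentially unbounded `SL±(2)`-valued cocycle over an ergodic
invertible transformation, there are two measurable families of projective points such that
every invariant probability measure on `X × ℙ(ℝ²)` is a convex combination of the graphs. -/
theorem stmt4
    {X : Type*} [MeasurableSpace X] [StandardBorelSpace X]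
    (μ : Measure X) [IsProbabilityMeasure μ]
    (f : X → X) (hbij : Function.Bijective f) (herg : Ergodic f μ)
    (A : X → GL (Fin 2) ℝ)
    (hA : Measurable fun x => ((A x : Matrix (Fin 2) (Fin 2) ℝ)))
    (hdet : ∀ x, (A x : Matrix (Fin 2) (Fin 2) ℝ).det = 1 ∨
                 (A x : Matrix (Fin 2) (Fin 2) ℝ).det = -1)
    (hunb : ∀ᵐ x ∂μ, ConvergesEssentiallyToInfinity fun n =>
        opNorm ((cocycleIter f A n x : GL (Fin 2) ℝ) : Matrix (Fin 2) (Fin 2) ℝ))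
    :
    ∃ E₁ E₂ : X → Proj 2, Measurable E₁ ∧ Measurable E₂ ∧
      ∀ μhat : Measure (X × Proj 2), IsProbabilityMeasure μhat →
        μhat.map Prod.fst = μ →
        μhat.map (fun q : X × Proj 2 => (f q.1, projAction (A q.1) q.2)) = μhat →
        ∃ l : ℝ, 0 ≤ l ∧ l ≤ 1 ∧
          μhat = ENNReal.ofReal l • μ.map (fun x => (x, E₁ x)) +
            ENNReal.ofReal (1 - l) • μ.map (fun x => (x, E₂ x)) := by
  have hf := herg.toMeasurePreserving
  have hdet2 : ∀ x, (A x : Matrix (Fin 2) (Fin 2) ℝ).det ^ 2 = 1 := fun x => by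
    rcases hdet x with h | h <;> simp [h]
  have hpair : ∀ κ : ProbabilityTheory.Kernel X (Proj 2), ProbabilityTheory.IsFiniteKernel κ →
      KernelEquivariant μ f A κ → ∀ᵐ x ∂μ, ∃ p q, κ x {p, q}ᶜ = 0 := fun κ _ hκ =>
    hκ.exists_pair hf hA hdet2 hunb
  by_cases hdirac : ∀ κ : ProbabilityTheory.Kernel X (Proj 2),
      ProbabilityTheory.IsFiniteKernel κ → KernelEquivariant μ f A κ →
      ∀ᵐ x ∂μ, ∃ p, κ x {p}ᶜ = 0
  · by_cases hex : ∃ κ : ProbabilityTheory.Kernel X (Proj 2),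
      ProbabilityTheory.IsMarkovKernel κ ∧ KernelEquivariant μ f A κ
    · obtain ⟨κ₀, _, hκ₀⟩ := hex
      obtain ⟨a, b, ha, -, hab⟩ := exists_measurable_atoms κ₀
      refine ⟨a, a, ha, ha, fun μhat _ hfst hinv => ?_⟩
      obtain ⟨κ, _, rfl, hκ⟩ := exists_kernelEquivariant hbij hf hA hfst hinv
      refine ⟨1, zero_le_one, le_rfl, compProd_eq_smul_map_add_smul_map ha ha ?_⟩
      filter_upwards [hdirac (κ + κ₀) inferInstance (hκ.add hκ₀), hpair κ₀ inferInstance hκ₀]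
        with x ⟨p, hp⟩ hx
      rw [add_apply, Measure.add_apply, add_eq_zero] at hp
      obtain ⟨-, hpos, -⟩ := hab x (IsProbabilityMeasure.ne_zero _) hx
      rw [mem_of_measure_compl_eq_zero hp.2 hpos]
      simpa using eq_dirac_of_measure_compl_eq_zero hp.1
    · refine ⟨fun _ => projMk 0, fun _ => projMk 0, measurable_const, measurable_const,
        fun μhat _ hfst hinv => ?_⟩
      obtain ⟨κ, hκm, -, hκ⟩ := exists_kernelEquivariant hbij hf hA hfst hinv
      exact absurd ⟨κ, hκm, hκ⟩ hex
  · simp only [not_forall, exists_prop] at hdirac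
    obtain ⟨κ₀, _, hκ₀, hne₀⟩ := hdirac
    obtain ⟨a, b, ha, hb, hne, hab⟩ := exists_common_atoms herg hpair hκ₀ hne₀
    by_cases heven : ∀ κ : ProbabilityTheory.Kernel X (Proj 2),
        ProbabilityTheory.IsMarkovKernel κ → KernelEquivariant μ f A κ →
        ∀ᵐ x ∂μ, ¬∃ p, 1 / 2 < κ x {p}
    · refine ⟨a, b, ha, hb, fun μhat _ hfst hinv => ?_⟩
      obtain ⟨κ, hκm, rfl, hκ⟩ := exists_kernelEquivariant hbij hf hA hfst hinv
      refine ⟨1 / 2, by norm_num, by norm_num, compProd_eq_smul_map_add_smul_map ha hb ?_⟩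
      filter_upwards [hne, hab κ inferInstance hκ, heven κ hκm hκ] with x hx hx' hle
      push Not at hle
      have hsum := measure_pair_eq_one hx hx'
      have hhalf : ENNReal.ofReal (1 / 2) = 1 / 2 := by
        rw [ENNReal.ofReal_div_of_pos two_pos]; simp
      have heq : ∀ u v : ℝ≥0∞, u ≤ 1 / 2 → v ≤ 1 / 2 → u + v = 1 → u = 1 / 2 := by
        intro u v hu hv huv
        refine le_antisymm hu ?_
        have hv' : v ≠ ∞ := ne_top_of_le_ne_top (by simp) hv
        rw [← ENNReal.add_le_add_iff_right (a := v) hv', huv]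
        exact (add_le_add_right hv _).trans_eq (ENNReal.add_halves 1)
      conv_lhs => rw [eq_smul_dirac_add_smul_dirac hx hx']
      rw [heq _ _ (hle _) (hle _) hsum, heq _ _ (hle _) (hle _) ((add_comm _ _).trans hsum),
        show (1 : ℝ) - 1 / 2 = 1 / 2 by norm_num, hhalf]
    · simp only [not_forall, exists_prop] at heven
      obtain ⟨κ₁, hκ₁m, hκ₁, hne₁⟩ := heven
      have hhalf := (ae_exists_half_lt_or herg hκ₁ ha hb (hab κ₁ inferInstance hκ₁)).resolve_right
        hne₁
      obtain ⟨a', b', ha', hb', hne', hset, hequi⟩ := exists_equivariant_reordering hf hκ₁ ha hb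
        hne (hab κ₁ inferInstance hκ₁) hhalf
      refine ⟨a', b', ha', hb', fun μhat _ hfst hinv => ?_⟩
      obtain ⟨κ, hκm, rfl, hκ⟩ := exists_kernelEquivariant hbij hf hA hfst hinv
      obtain ⟨c, hc⟩ := herg.ae_eq_const_of_ae_eq_comp₀
        (measurable_kernel_singleton κ ha').nullMeasurable (by
          filter_upwards [hκ, hequi] with x h1 h2
          rw [Function.comp_apply, h2, h1, map_projAction_singleton])
      have hc1 : c ≤ 1 := by
        obtain ⟨x, hx⟩ := hc.exists
        rw [← show κ x {a' x} = c from hx]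
        exact prob_le_one
      refine ⟨c.toReal, ENNReal.toReal_nonneg, ENNReal.toReal_mono ENNReal.one_ne_top hc1,
        compProd_eq_smul_map_add_smul_map ha' hb' ?_⟩
      filter_upwards [hc, hne', hab κ inferInstance hκ] with x hx hx1 hx2
      rw [← hset] at hx2
      have hsum := measure_pair_eq_one hx1 hx2
      have hctop : c ≠ ∞ := ne_top_of_le_ne_top ENNReal.one_ne_top hc1
      rw [show κ x {a' x} = c from hx] at hsum
      conv_lhs => rw [eq_smul_dirac_add_smul_dirac hx1 hx2]
      rw [show κ x {a' x} = c from hx, ENNReal.ofReal_toReal hctop,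
        ENNReal.ofReal_sub _ ENNReal.toReal_nonneg, ENNReal.ofReal_toReal hctop,
        ENNReal.ofReal_one, ENNReal.eq_sub_of_add_eq' ENNReal.one_ne_top
          ((add_comm _ _).trans hsum)]
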